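/- arXiv:math/0412124 — 3 statements merged into one kernel-verified Lean document; each statement's English description precedes it below -/
import Mathlib

section
/- Let P be a graded poset, let P ∪ {2̂} denote P with a new maximum element 2̂ adjoined, and define the order- and rank-preserving map z : T(P) → P ∪ {2̂} by z([x,y]) = y and z(1̂_{T(P)}) = 2̂. Then for every chain c = {0̂ = x₀ < x₁ < ⋯ < x_k = 2̂} in P ∪ {2̂}, the number of chains c′ from the minimum element [−1̂,0̂] of T(P) to 1̂_{T(P)} with z(c′) = c equals ∏_{i=1}^{k−1} |[x_{i−1}, x_i]|, where |[x,y]| denotes the number of elements of the interval [x,y] in P. -/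
open scoped TensorProduct

noncomputable section

namespace Tcheb

/-! ### The algebra `R⟨a,b⟩` of ab-polynomials -/

/-- Words in the two noncommuting letters `a` (encoded `true`) and `b` (encoded `false`). -/
abbrev ABWord : Type := FreeMonoid Bool

/-- The ring `R⟨a,b⟩` of polynomials in two noncommuting variables `a` and `b`. -/
abbrev AB (R : Type) [CommRing R] : Type := MonoidAlgebra R ABWord

variable (R : Type) [CommRing R]

/-- The ab-monomial corresponding to a word. -/
def word (l : List Bool) : AB R := MonoidAlgebra.of R ABWord (FreeMonoid.ofList l)

/-- The variable `a`. -/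
def av : AB R := word R [true]
/-- The variable `b`. -/
def bv : AB R := word R [false]
/-- `c = a + b`. -/
def cv : AB R := av R + bv R
/-- `d = ab + ba`. -/
def dv : AB R := av R * bv R + bv R * av R
/-- `a - b`. -/
def ev : AB R := av R - bv R

/-- The linear map defined by prescribing values on the basis of ab-monomials. -/
def onBasis {M : Type} [AddCommMonoid M] [Module R M] (f : List Bool → M) :
    AB R →ₗ[R] M :=
  (Finsupp.lift M R ABWord fun w => f (FreeMonoid.toList w)) ∘ₗ
    (MonoidAlgebra.coeffLinearEquiv R).toLinearMap

/-- The algebra map `A` with `A(a) = 1`, `A(b) = 0`. -/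
def Amap : AB R →ₐ[R] R :=
  MonoidAlgebra.lift R R ABWord (FreeMonoid.lift fun x => if x then (1 : R) else 0)

/-- The coproduct on `R⟨a,b⟩`: on an ab-monomial `u₁ ⋯ u_k` it is
`Σ_{i=1}^k u₁ ⋯ u_{i-1} ⊗ u_{i+1} ⋯ u_k`. -/
def Delta : AB R →ₗ[R] AB R ⊗[R] AB R :=
  onBasis R fun w => ∑ i ∈ Finset.range w.length,
    word R (w.take i) ⊗ₜ[R] word R (w.drop (i + 1))

/-- The linear map `C(u) = 2·A(u) + Σ_u A(u₍₁₎)·A(u₍₂₎)`. -/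
def Cmap : AB R →ₗ[R] R :=
  2 • (Amap R).toLinearMap +
    (LinearMap.mul' R R ∘ₗ
      TensorProduct.map (Amap R).toLinearMap (Amap R).toLinearMap) ∘ₗ Delta R

/-- `κ(u) = A(u)·(a-b)^(deg u)` on homogeneous `u`, extended linearly. -/
def kappa : AB R →ₗ[R] AB R :=
  onBasis R fun w => Amap R (word R w) • ev R ^ w.length

/-- `ν(u) = C(u)·(a-b)^(deg u)` on homogeneous `u`, extended linearly. -/
def nuMap : AB R →ₗ[R] AB R :=
  onBasis R fun w => Cmap R (word R w) • ev R ^ w.length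

end Tcheb

namespace Tcheb

/-- Cutting a word into the list of segments between the (sorted) cut positions. -/
def segments : List Bool → List ℕ → List (List Bool)
  | l, [] => [l]
  | l, i :: rest => l.take i :: segments (l.drop (i + 1)) (rest.map fun j => j - (i + 1))
  termination_by _ cuts => cuts.length
  decreasing_by simp

variable (R : Type) [CommRing R]

/-- For segments `[s₁, …, s_k]` this is `ν(s₁)·b·ν(s₂)·b ⋯ b·ν(s_{k-1})·b·κ(s_k)`. -/
def chainProd : List (List Bool) → AB R
  | [] => 1
  | [s] => kappa R (word R s)
  | s :: rest => nuMap R (word R s) * bv R * chainProd rest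

/-- The Tchebyshev transform (of the first kind) on ab-polynomials:
`T(u) = Σ_{k ≥ 1} Σ_u ν(u₍₁₎)·b·ν(u₍₂₎)·b ⋯ b·ν(u₍ₖ₋₁₎)·b·κ(u₍ₖ₎)`,
where the inner sum is over the `k`-fold coproduct.  On the ab-monomial basis this
is the sum, over all sets of positions of deleted letters, of the corresponding
products over the resulting segments. -/
def Tmap : AB R →ₗ[R] AB R :=
  onBasis R fun w => ∑ S : Finset (Fin w.length),
    chainProd R (segments w ((S.sort (· ≤ ·)).map Fin.val))

/-- The `ω` map on a word: replace each occurrence of `ab` by `2d` and all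
remaining letters by `c`. -/
def omegaWord : List Bool → AB R
  | [] => 1
  | true :: false :: rest => (2 * dv R) * omegaWord rest
  | _ :: rest => cv R * omegaWord rest

/-- The `ω` map of Billera–Ehrenborg–Readdy. -/
def omegaMap : AB R →ₗ[R] AB R := onBasis R fun w => omegaWord R w

/-- The reversal involution `u ↦ u*` of ab-polynomials. -/
def revMap : AB R →ₗ[R] AB R := onBasis R fun w => word R w.reverse

/-- `H*(1) = 0` and `H*(u·a) = H*(u·b) = u`. -/
def Hstar : AB R →ₗ[R] AB R :=
  onBasis R fun w => if w = [] then 0 else word R w.dropLast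

/-- The Tchebyshev transform of the second kind `U(u) = H*(T(u·a))`. -/
def Umap : AB R →ₗ[R] AB R := Hstar R ∘ₗ Tmap R ∘ₗ LinearMap.mulRight R (av R)

/-- `σ(u) = Σ_u κ(u₍₁₎)·b·T(u₍₂₎)`. -/
def sigmaMap : AB R →ₗ[R] AB R :=
  LinearMap.mul' R (AB R) ∘ₗ
    TensorProduct.map (LinearMap.mulRight R (bv R) ∘ₗ kappa R) (Tmap R) ∘ₗ Delta R

/-! ### Graded posets and the ab-index -/

/-- `rk` is a rank function for a bounded poset: `rk ⊥ = 0` and covers raise rank by one. -/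
def IsRankFun (α : Type) [PartialOrder α] [OrderBot α] (rk : α → ℕ) : Prop :=
  rk ⊥ = 0 ∧ ∀ x y : α, x ⋖ y → rk y = rk x + 1

/-- `f` lists the elements of a chain in increasing order with respect to the
strict order relation `lt`. -/
def IsStrictChain {α : Type} (lt : α → α → Prop) {n : ℕ} (f : Fin (n + 1) → α) : Prop :=
  ∀ i j : Fin (n + 1), i < j → lt (f i) (f j)

/-- The weight of a chain `x₀ < x₁ < ⋯ < x_k`:
`(a-b)^{ρ(x₀,x₁)-1}·b·(a-b)^{ρ(x₁,x₂)-1}·b ⋯ b·(a-b)^{ρ(x_{k-1},x_k)-1}`. -/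
def chainWt {α : Type} (rk : α → ℕ) {n : ℕ} (f : Fin (n + 1) → α) : AB R :=
  (List.intersperse (bv R)
    (List.ofFn fun i : Fin n => ev R ^ (rk (f i.succ) - rk (f i.castSucc) - 1))).prod

/-- The ab-index `Ψ` of the graded poset with strict order relation `lt`, rank
function `rk`, minimum `b` and maximum `t`: the sum of the weights of all chains
from `b` to `t`. -/
def PsiRel {α : Type} (lt : α → α → Prop) (rk : α → ℕ) (b t : α) : AB R :=
  ∑ᶠ (n : ℕ), ∑ᶠ (f : Fin (n + 1) → α)
    (_ : IsStrictChain lt f ∧ f 0 = b ∧ f (Fin.last n) = t), chainWt R rk f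

end Tcheb

namespace Tcheb

/-! ### The Tchebyshev transform of a graded poset -/

section TPoset

variable (α : Type) [PartialOrder α] [BoundedOrder α]

/-- The elements `[x,y]` of the Tchebyshev transform: intervals of `P ∪ {-1̂}`,
i.e. pairs `(x,y)` with `x ∈ P ∪ {-1̂}`, `y ∈ P` and `x < y`. -/
def TPel : Type := {p : WithBot α × α // p.1 < (p.2 : WithBot α)}

/-- The underlying set of the Tchebyshev transform `T(P)`: the intervals `[x,y]`
together with a new maximum element (`none`). -/
def TP : Type := Option (TPel α)

/-- The cover relation of the Tchebyshev transform `T(P)`: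
`[x,y] ⋖ [y,w]` and `[x,y] ⋖ [x,w]` whenever `y ⋖ w` in `P`, and `[x,1̂] ⋖ 1̂_{T(P)}`. -/
inductive TPcov : TP α → TP α → Prop
  | up {x : WithBot α} {y w : α} (h1 : x < (y : WithBot α))
      (h2 : (y : WithBot α) < (w : WithBot α)) (hc : y ⋖ w) :
      TPcov (some ⟨(x, y), h1⟩) (some ⟨((y : WithBot α), w), h2⟩)
  | same {x : WithBot α} {y w : α} (h1 : x < (y : WithBot α))
      (h2 : x < (w : WithBot α)) (hc : y ⋖ w) :
      TPcov (some ⟨(x, y), h1⟩) (some ⟨(x, w), h2⟩)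
  | top {x : WithBot α} (h1 : x < ((⊤ : α) : WithBot α)) :
      TPcov (some ⟨(x, (⊤ : α)), h1⟩) none

/-- The strict order relation of `T(P)`, generated by the cover relation. -/
def TPlt : TP α → TP α → Prop := Relation.TransGen (TPcov α)

/-- The order relation of `T(P)`, generated by the cover relation. -/
def TPle : TP α → TP α → Prop := Relation.ReflTransGen (TPcov α)

/-- The minimum element `[-1̂, 0̂]` of `T(P)`. -/
def TPbot : TP α := some ⟨((⊥ : WithBot α), (⊥ : α)), WithBot.bot_lt_coe _⟩

/-- The maximum element `1̂_{T(P)}` of `T(P)`. -/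
def TPtop : TP α := none

/-- The rank function of `T(P)`: `ρ([x,y]) = ρ(y)` and `ρ(1̂_{T(P)}) = ρ(P) + 1`. -/
def TPrk (rk : α → ℕ) : TP α → ℕ
  | some p => rk p.1.2
  | none => rk (⊤ : α) + 1

theorem TPbot_ne_TPtop : TPbot α ≠ TPtop α := Option.some_ne_none _

/-- The map `z : T(P) → P ∪ {2̂}` with `z([x,y]) = y` and `z(1̂_{T(P)}) = 2̂`. -/
def zmap : TP α → WithTop α
  | some p => (p.1.2 : WithTop α)
  | none => ⊤

/-- The number of elements of the interval `[u,v]` of `P`, for `u, v ∈ P ∪ {2̂}`. -/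
def intervalCard (u v : WithTop α) : ℕ :=
  Set.ncard {t : α | u ≤ (t : WithTop α) ∧ (t : WithTop α) ≤ v}

end TPoset

/-! ### The dual diamond product -/

/-- The strict order relation of the dual diamond product
`P ◇* Q = ((P ∖ {1̂}) × (Q ∖ {1̂})) ∪ {1̂}` (with `none` the new maximum), built from
the order relations `leA, ltA` and `leB, ltB` of the two factors. -/
def dsLT {A B : Type} (leA ltA : A → A → Prop) (leB ltB : B → B → Prop) :
    Option (A × B) → Option (A × B) → Prop
  | some p, some q => (leA p.1 q.1 ∧ leB p.2 q.2) ∧ (ltA p.1 q.1 ∨ ltB p.2 q.2)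
  | some _, none => True
  | none, _ => False

/-! ### EL-labelings -/

/-- The list of edge labels along a chain (given as a list of poset elements). -/
def labelsList {α Λ : Type} (lam : α → α → Λ) (l : List α) : List Λ :=
  (l.zip l.tail).map fun p => lam p.1 p.2

/-- `l` is a maximal (saturated) chain of the interval `[x,y]` with respect to the
cover relation `cov`: it runs from `x` to `y` and every step is a cover. -/
def IsMaxChainList {α : Type} (cov : α → α → Prop) (x y : α) (l : List α) : Prop :=
  l.head? = some x ∧ l.getLast? = some y ∧ l.Chain' cov

/-- An `EL`-labeling of the poset whose cover relation is `cov`, with labels in the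
linearly ordered set `(Λ, lle, llt)`: every interval has a unique rising maximal
chain, which moreover is lexicographically least among all maximal chains of the
interval. -/
def IsELLabeling (α Λ : Type) (lle llt : Λ → Λ → Prop)
    (cov : α → α → Prop) (lam : α → α → Λ) : Prop :=
  ∀ x y : α, Relation.ReflTransGen cov x y →
    ∃ l : List α, (IsMaxChainList cov x y l ∧ (labelsList lam l).Chain' lle) ∧
      (∀ l' : List α, IsMaxChainList cov x y l' →
        (labelsList lam l').Chain' lle → l' = l) ∧
      (∀ l' : List α, IsMaxChainList cov x y l' →
        labelsList lam l = labelsList lam l' ∨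
          List.Lex llt (labelsList lam l) (labelsList lam l'))

/-! ### Eulerian posets -/

/-- A graded poset is Eulerian if every nontrivial interval `[x,y]` has the
same number of elements of even rank as of odd rank. -/
def IsEulerian (α : Type) [PartialOrder α] (rk : α → ℕ) : Prop :=
  ∀ x y : α, x < y →
    Set.ncard {z : α | x ≤ z ∧ z ≤ y ∧ Even (rk z)} =
      Set.ncard {z : α | x ≤ z ∧ z ≤ y ∧ ¬ Even (rk z)}

/-! ### The face lattice of the crosspolytope -/

/-- A face of the `n`-dimensional crosspolytope: a partial sign vector, i.e. the
pair `(S, ε)` of a subset `S ⊆ {1,…,n}` (the set of coordinates where the function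
takes a value `some`) together with a sign function `ε` on `S`. -/
def CrossEl (n : ℕ) : Type := Fin n → Option Bool

/-- `(S,ε) ≤ (T,δ)` iff `S ⊆ T` and `δ` restricted to `S` is `ε`. -/
instance (n : ℕ) : PartialOrder (CrossEl n) where
  le f g := ∀ i s, f i = some s → g i = some s
  le_refl f i s h := h
  le_trans f g h fg gh i s hi := gh i s (fg i s hi)
  le_antisymm f g fg gf := by
    funext i
    cases hf : f i with
    | some s => exact (fg i s hf).symm
    | none =>
      cases hg : g i with
      | some s => exact absurd (gf i s hg) (by simp [hf])
      | none => rfl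

/-- The face lattice of the `n`-dimensional crosspolytope: all partial sign
vectors together with a new maximum element. -/
abbrev Cross (n : ℕ) : Type := WithTop (CrossEl n)

/-- The rank function of the face lattice of the crosspolytope:
`ρ(S,ε) = |S|` and the maximum has rank `n + 1`. -/
def crossRk (n : ℕ) : Cross n → ℕ
  | none => n + 1
  | some f => (Finset.univ.filter fun i : Fin n => (f i).isSome).card

/-- The minimal element (the empty face) of the crosspolytope face lattice. -/
def crossBot (n : ℕ) : Cross n := WithTop.some (fun _ => none)

/-- The maximal element of the crosspolytope face lattice. -/
def crossTop (n : ℕ) : Cross n := ⊤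

/-! ### Quasisymmetric functions -/

/-- The monomial quasisymmetric function `M_{(p₁,…,p_k)}`, as a formal power
series in the countably many commuting variables `t₁, t₂, …` (indexed by `ℕ`). -/
def MQ (R : Type) [CommRing R] (ps : List ℕ) : MvPowerSeries ℕ R :=
  fun m => if ((m.support.sort (· ≤ ·)).map fun i => m i) = ps then 1 else 0

/-- The `t`-part of a monomial in the variables `s` (index `none`) and
`t₁, t₂, …` (indices `some i`). -/
def tpart (m : Option ℕ →₀ ℕ) : ℕ →₀ ℕ :=
  Finsupp.comapDomain some m (Option.some_injective ℕ).injOn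

/-- The type B monomial quasisymmetric function `s^p · M_{(p₁,…,p_k)}`, a formal
power series in the variables `s` (index `none`) and `t₁, t₂, …` (indices `some i`). -/
def MB (R : Type) [CommRing R] (p : ℕ) (ps : List ℕ) : MvPowerSeries (Option ℕ) R :=
  fun m => if m none = p ∧
      (((tpart m).support.sort (· ≤ ·)).map fun i => tpart m i) = ps then 1 else 0

/-- The quasisymmetric function `F(P)` of the graded poset with strict order
relation `lt`, rank function `rk`, minimum `b` and maximum `t`:
`F(P) = Σ_c M_{(ρ(x₀,x₁),…,ρ(x_{k-1},x_k))}` over all chains `c` from `b` to `t`. -/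
def FQ (R : Type) [CommRing R] {α : Type} (lt : α → α → Prop) (rk : α → ℕ)
    (b t : α) : MvPowerSeries ℕ R :=
  ∑ᶠ (n : ℕ), ∑ᶠ (f : Fin (n + 1) → α)
    (_ : IsStrictChain lt f ∧ f 0 = b ∧ f (Fin.last n) = t),
    MQ R (List.ofFn fun i : Fin n => rk (f i.succ) - rk (f i.castSucc))

/-- The type B quasisymmetric function `F_B(P) = Σ_{0̂ < x ≤ 1̂} s^{ρ(x)-1}·F([x,1̂])`,
written as a sum over all chains `0̂ < x₀ < x₁ < ⋯ < x_k = 1̂` of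
`s^{ρ(x₀)-1}·M_{(ρ(x₀,x₁),…,ρ(x_{k-1},x_k))}`. -/
def FB (R : Type) [CommRing R] {α : Type} (lt : α → α → Prop) (rk : α → ℕ)
    (b t : α) : MvPowerSeries (Option ℕ) R :=
  ∑ᶠ (n : ℕ), ∑ᶠ (f : Fin (n + 1) → α)
    (_ : IsStrictChain lt f ∧ lt b (f 0) ∧ f (Fin.last n) = t),
    MB R (rk (f 0) - 1) (List.ofFn fun i : Fin n => rk (f i.succ) - rk (f i.castSucc))

/-! ### Characters and the chain maps -/

/-- A character on `k⟨a,b⟩`: a linear functional which is multiplicative with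
respect to Cartesian products of graded posets (of rank at least 1). -/
def IsCharacter (k : Type) [Field k] (G : AB k →ₗ[k] k) : Prop :=
  ∀ (α β : Type) [Fintype α] [Fintype β] [PartialOrder α] [PartialOrder β]
    [BoundedOrder α] [BoundedOrder β], ∀ (rkα : α → ℕ) (rkβ : β → ℕ),
    IsRankFun α rkα → IsRankFun β rkβ → 1 ≤ rkα ⊤ → 1 ≤ rkβ ⊤ →
    G (PsiRel k (· < ·) (fun p : α × β => rkα p.1 + rkβ p.2)
        ((⊥ : α), (⊥ : β)) ((⊤ : α), (⊤ : β))) =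
      G (PsiRel k (· < ·) rkα ⊥ ⊤) * G (PsiRel k (· < ·) rkβ ⊥ ⊤)

/-- The quasisymmetric function image `g̃F(P)` of the chain map of the second kind:
`Σ_c G(Ψ([x₀,x₁])) ⋯ G(Ψ([x_{k-1},x_k])) · M_{(ρ(x₀,x₁),…,ρ(x_{k-1},x_k))}`,
summed over all chains `c = {b = x₀ < ⋯ < x_k = t}`. -/
def gtF (k : Type) [Field k] (G : AB k →ₗ[k] k) {α : Type} (lt : α → α → Prop)
    (rk : α → ℕ) (b t : α) : MvPowerSeries ℕ k :=
  ∑ᶠ (n : ℕ), ∑ᶠ (f : Fin (n + 1) → α)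
    (_ : IsStrictChain lt f ∧ f 0 = b ∧ f (Fin.last n) = t),
    (∏ i : Fin n, G (PsiRel k lt rk (f i.castSucc) (f i.succ))) •
      MQ k (List.ofFn fun i : Fin n => rk (f i.succ) - rk (f i.castSucc))

/-- The type B quasisymmetric function image `gF_B(P) = Σ_{0̂ < x ≤ 1̂}
s^{ρ(x)-1}·g̃F([x,1̂])` of the chain map of the first kind, written as a sum over
all chains `0̂ < x₀ < ⋯ < x_k = 1̂`. -/
def gFB (k : Type) [Field k] (G : AB k →ₗ[k] k) {α : Type} (lt : α → α → Prop)
    (rk : α → ℕ) (b t : α) : MvPowerSeries (Option ℕ) k :=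
  ∑ᶠ (n : ℕ), ∑ᶠ (f : Fin (n + 1) → α)
    (_ : IsStrictChain lt f ∧ lt b (f 0) ∧ f (Fin.last n) = t),
    (∏ i : Fin n, G (PsiRel k lt rk (f i.castSucc) (f i.succ))) •
      MB k (rk (f 0) - 1) (List.ofFn fun i : Fin n => rk (f i.succ) - rk (f i.castSucc))

/-- The space of homogeneous ab-polynomials of degree `n`. -/
def ABhomog (k : Type) [Field k] (n : ℕ) : Submodule k (AB k) :=
  Submodule.span k {x : AB k | ∃ w : List Bool, w.length = n ∧ x = word k w}

/-!
The strict order of `T(P)` is explicit: `[x, y] < [x', y']` exactly when `y < y'` and either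
`x' = x` or `y ≤ x'`. Hence an element `[x, y]` has, over a given `w > y`, exactly the upper bounds
`[x, w]` and `[t, w]` with `y ≤ t < w`; letting `w` itself stand for the extra one `[x, w]`, these
are as many as the elements of `[y, w]`. The number depends only on `y` and `w`, not on `x`, so a
chain of `P ∪ {2̂}` is lifted step by step with independent choices, and the last step, to `1̂`, is
forced.
-/

section Paths

open Cardinal

theorem isStrictChain_iff_succ {β : Type} (R : β → β → Prop) [IsTrans β R] {n : ℕ}
    (g : Fin (n + 1) → β) :
    IsStrictChain R g ↔ ∀ i : Fin n, R (g i.castSucc) (g i.succ) :=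
  Fin.liftFun_iff_succ R

variable {β : Type*} (R : β → β → Prop)

/-- The sequences of `R`-steps starting at `a` whose `i`-th term satisfies `P i`. -/
def pathsFrom {n : ℕ} (P : Fin (n + 1) → β → Prop) (a : β) : Set (Fin (n + 1) → β) :=
  {g | g 0 = a ∧ (∀ i : Fin n, R (g i.castSucc) (g i.succ)) ∧ ∀ i, P i (g i)}

variable {R}

theorem pathsFrom_zero {P : Fin 1 → β → Prop} {a : β} (ha : P 0 a) :
    pathsFrom R P a = {fun _ => a} := by
  ext g
  constructor
  · rintro ⟨rfl, -⟩
    exact funext fun i => congrArg g (Fin.fin_one_eq_zero i)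
  · rintro rfl
    exact ⟨rfl, fun i => i.elim0, Fin.forall_fin_one.2 ha⟩

theorem mem_pathsFrom_succ_iff {n : ℕ} {P : Fin (n + 2) → β → Prop} {a : β} (ha : P 0 a)
    {g : Fin (n + 2) → β} :
    g ∈ pathsFrom R P a ↔
      g 0 = a ∧ R a (g 1) ∧ P 1 (g 1) ∧
        Fin.tail g ∈ pathsFrom R (fun i => P i.succ) (g 1) := by
  simp only [pathsFrom, Set.mem_ofPred_eq, Fin.tail, Fin.forall_fin_succ (n := n + 1),
    Fin.forall_fin_succ (n := n)]
  constructor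
  · rintro ⟨rfl, ⟨h, hR⟩, -, h1, hP⟩
    exact ⟨rfl, h, h1, rfl, hR, h1, hP⟩
  · rintro ⟨rfl, h, -, -, hR, h1, hP⟩
    exact ⟨rfl, ⟨h, hR⟩, ha, h1, hP⟩

/-- A path of length `n + 1` is its first step followed by a path of length `n`. -/
def pathsFromSuccEquiv {n : ℕ} {P : Fin (n + 2) → β → Prop} {a : β} (ha : P 0 a) :
    pathsFrom R P a ≃
      Σ b : {b | R a b ∧ P 1 b}, pathsFrom R (fun i : Fin (n + 1) => P i.succ) b.1 where
  toFun g :=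
    have hg := (mem_pathsFrom_succ_iff ha).1 g.2
    ⟨⟨g.1 1, hg.2.1, hg.2.2.1⟩, ⟨Fin.tail g.1, hg.2.2.2⟩⟩
  invFun s := ⟨Fin.cons a s.2.1, by
    obtain ⟨⟨b, hR, hP⟩, h, hb, hh⟩ := s
    obtain rfl : h 0 = b := hb
    exact (mem_pathsFrom_succ_iff ha).2 ⟨rfl, hR, hP, rfl, hh⟩⟩
  left_inv := by
    rintro ⟨g, rfl, -⟩
    exact Subtype.ext (Fin.cons_self_tail g)
  right_inv := by
    rintro ⟨⟨b, _⟩, h, hb, _⟩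
    obtain rfl : h 0 = b := hb
    rfl

theorem mk_pathsFrom {n : ℕ} {P : Fin (n + 1) → β → Prop} {c : Fin n → Cardinal}
    (hc : ∀ (i : Fin n) (a : β), P i.castSucc a → #{b | R a b ∧ P i.succ b} = c i)
    {a : β} (ha : P 0 a) : #(pathsFrom R P a) = ∏ i, c i := by
  induction n generalizing a with
  | zero => rw [pathsFrom_zero ha, mk_singleton, Fin.prod_univ_zero]
  | succ n ih =>
    have htail (b : {b | R a b ∧ P 1 b}) :
        #(pathsFrom R (fun i : Fin (n + 1) => P i.succ) b.1) = ∏ i : Fin n, c i.succ :=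
      ih (fun i => hc i.succ) b.2.2
    have hfirst : #{b | R a b ∧ P 1 b} = c 0 := hc 0 a ha
    rw [mk_congr (pathsFromSuccEquiv ha), mk_sigma, funext htail, sum_const', hfirst,
      Fin.prod_univ_succ]

end Paths

section IsCoverGenerated

variable {α : Type*} [Preorder α]

variable (α) in
/-- Any two comparable elements are joined by a finite saturated chain, as in every graded poset of
finite rank. This is what makes the order generated by the covers of `T(P)` explicit. -/
def IsCoverGenerated : Prop :=
  ∀ ⦃x y : α⦄, x ≤ y → Relation.ReflTransGen (· ⋖ ·) x y

theorem isCoverGenerated_of_finite {α : Type*} [PartialOrder α] [Finite α] :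
    IsCoverGenerated α := by
  classical
  have := Fintype.ofFinite α
  let : LocallyFiniteOrder α := Fintype.toLocallyFiniteOrder
  exact fun _ _ => le_iff_reflTransGen_covBy.1

theorem IsCoverGenerated.exists_covBy_reflTransGen (hα : IsCoverGenerated α) {x y : α}
    (h : x < y) : ∃ u, x ⋖ u ∧ Relation.ReflTransGen (· ⋖ ·) u y :=
  (hα h.le).cases_head.resolve_left h.ne

end IsCoverGenerated

section LowerEndpoints

open Cardinal

variable {α : Type*} [Preorder α]

theorem mem_insert_image_coe_Ico_iff {x x' : WithBot α} {y w : α} (hy : x < (y : WithBot α))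
    (hyw : y < w) :
    x' ∈ insert x ((↑) '' Set.Ico y w : Set (WithBot α)) ↔
      (x' = x ∨ (y : WithBot α) ≤ x') ∧ x' < w := by
  constructor
  · rintro (rfl | ⟨t, ⟨hyt, htw⟩, rfl⟩)
    · exact ⟨Or.inl rfl, hy.trans (WithBot.coe_lt_coe.2 hyw)⟩
    · exact ⟨Or.inr (WithBot.coe_le_coe.2 hyt), WithBot.coe_lt_coe.2 htw⟩
  · rintro ⟨rfl | hyx', hx'w⟩
    · exact Set.mem_insert _ _
    · obtain ⟨t, rfl, hyt⟩ := WithBot.coe_le_iff.1 hyx'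
      exact Or.inr ⟨t, ⟨hyt, WithBot.coe_lt_coe.1 hx'w⟩, rfl⟩

theorem mk_insert_image_coe_Ico {α : Type*} [PartialOrder α] {x : WithBot α} {y w : α}
    (hy : x < (y : WithBot α)) (hyw : y ≤ w) :
    #(insert x ((↑) '' Set.Ico y w) : Set (WithBot α)) = #(Set.Icc y w) := by
  have hx : x ∉ ((↑) '' Set.Ico y w : Set (WithBot α)) := by
    rintro ⟨t, ht, rfl⟩
    exact (WithBot.coe_lt_coe.1 hy).not_ge ht.1
  rw [mk_insert hx, mk_image_eq WithBot.coe_injective, ← Set.Ico_insert_right hyw,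
    mk_insert Set.right_notMem_Ico]

end LowerEndpoints

section TchebyshevTransform

variable {α : Type} [PartialOrder α]

/-- The element `[x, y]` of `T(P)`. -/
abbrev TPmk (x : WithBot α) (y : α) (h : x < (y : WithBot α)) : TP α :=
  some ⟨(x, y), h⟩

theorem left_eq_of_TPmk_eq {x x' : WithBot α} {y y' : α} {h : x < (y : WithBot α)}
    {h' : x' < (y' : WithBot α)} (e : TPmk x y h = TPmk x' y' h') : x = x' :=
  congrArg (fun p : TPel α => p.1.1) (Option.some.inj e)

theorem zmap_eq_top_iff {a : TP α} : zmap α a = ⊤ ↔ a = TPtop α := by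
  rcases a with _ | a
  · exact iff_of_true rfl rfl
  · exact iff_of_false WithTop.coe_ne_top (Option.some_ne_none a)

theorem zmap_eq_coe_iff {a : TP α} {y : α} : zmap α a = y ↔ ∃ x h, a = TPmk x y h := by
  constructor
  · intro ha
    rcases a with _ | ⟨⟨x, y'⟩, h⟩
    · exact absurd ha WithTop.top_ne_coe
    · obtain rfl : y' = y := WithTop.coe_injective ha
      exact ⟨x, h, rfl⟩
  · rintro ⟨x, h, rfl⟩
    rfl

section Order

/-- The strict order of `T(P)`, described without reference to covers. -/
def ExplicitLT : TP α → TP α → Prop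
  | some p, some q => p.1.2 < q.1.2 ∧ (q.1.1 = p.1.1 ∨ (p.1.2 : WithBot α) ≤ q.1.1)
  | some _, none => True
  | none, _ => False

instance : IsTrans (TP α) ExplicitLT where
  trans a b c hab hbc := by
    rcases a with _ | p
    · exact hab.elim
    rcases b with _ | q
    · exact hbc.elim
    rcases c with _ | r
    · trivial
    obtain ⟨hpq, hpq'⟩ := hab
    obtain ⟨hqr, hr | hr⟩ := hbc
    · exact ⟨hpq.trans hqr, hr ▸ hpq'⟩
    · exact ⟨hpq.trans hqr, Or.inr ((WithBot.coe_le_coe.2 hpq.le).trans hr)⟩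

variable [BoundedOrder α]

instance : IsTrans (TP α) (TPlt α) :=
  inferInstanceAs (IsTrans _ (Relation.TransGen _))

theorem TPcov.explicitLT {a b : TP α} (h : TPcov α a b) : ExplicitLT a b := by
  cases h with
  | up _ _ hc => exact ⟨hc.lt, Or.inr le_rfl⟩
  | same _ _ hc => exact ⟨hc.lt, Or.inl rfl⟩
  | top _ => trivial

theorem TPle_of_reflTransGen_covBy {x : WithBot α} {y w : α}
    (h : Relation.ReflTransGen (· ⋖ ·) y w) (hy : x < (y : WithBot α))
    (hw : x < (w : WithBot α)) : TPle α (TPmk x y hy) (TPmk x w hw) := by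
  induction h using Relation.ReflTransGen.head_induction_on with
  | refl => exact .refl
  | head hyu _ ih =>
    have hu := hy.trans (WithBot.coe_lt_coe.2 hyu.lt)
    exact (ih hu).head (TPcov.same hy hu hyu)

namespace IsCoverGenerated

theorem TPlt_same (hα : IsCoverGenerated α) {x : WithBot α} {y w : α} (hy : x < (y : WithBot α))
    (hw : x < (w : WithBot α)) (h : y < w) : TPlt α (TPmk x y hy) (TPmk x w hw) := by
  obtain ⟨u, hyu, huw⟩ := hα.exists_covBy_reflTransGen h
  have hu := hy.trans (WithBot.coe_lt_coe.2 hyu.lt)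
  exact .head' (TPcov.same hy hu hyu) (TPle_of_reflTransGen_covBy huw hu hw)

theorem TPlt_up (hα : IsCoverGenerated α) {x : WithBot α} {y t w : α}
    (hy : x < (y : WithBot α)) (hyt : y ≤ t) (htw : (t : WithBot α) < (w : WithBot α)) :
    TPlt α (TPmk x y hy) (TPmk t w htw) := by
  obtain ⟨u, htu, huw⟩ := hα.exists_covBy_reflTransGen (WithBot.coe_lt_coe.1 htw)
  have ht := hy.trans_le (WithBot.coe_le_coe.2 hyt)
  have hu := WithBot.coe_lt_coe.2 htu.lt
  have hyt' := TPle_of_reflTransGen_covBy (hα hyt) hy ht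
  exact (Relation.TransGen.tail' hyt' (TPcov.up ht hu htu)).trans_left
    (TPle_of_reflTransGen_covBy huw hu htw)

theorem TPlt_TPtop (hα : IsCoverGenerated α) {x : WithBot α} {y : α} (hy : x < (y : WithBot α)) :
    TPlt α (TPmk x y hy) (TPtop α) :=
  have ht := hy.trans_le (WithBot.coe_le_coe.2 le_top)
  .tail' (TPle_of_reflTransGen_covBy (hα le_top) hy ht) (TPcov.top ht)

theorem TPlt_iff_explicitLT (hα : IsCoverGenerated α) {a b : TP α} :
    TPlt α a b ↔ ExplicitLT a b := by
  refine ⟨Relation.transGen_minimal (fun _ _ => TPcov.explicitLT) a b, fun h => ?_⟩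
  rcases a with _ | ⟨⟨x, y⟩, hy⟩
  · exact h.elim
  rcases b with _ | ⟨⟨x', w⟩, hw⟩
  · exact hα.TPlt_TPtop hy
  obtain ⟨hyw, rfl | hx'⟩ := h
  · exact hα.TPlt_same hy hw hyw
  · obtain ⟨t, rfl, hyt⟩ := WithBot.coe_le_iff.1 hx'
    exact hα.TPlt_up hy hyt hw

theorem TPlt_TPmk_iff (hα : IsCoverGenerated α) {x x' : WithBot α} {y w : α}
    {hy : x < (y : WithBot α)} {hw : x' < (w : WithBot α)} :
    TPlt α (TPmk x y hy) (TPmk x' w hw) ↔ y < w ∧ (x' = x ∨ (y : WithBot α) ≤ x') :=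
  hα.TPlt_iff_explicitLT

end IsCoverGenerated

end Order

section Fibers

open Cardinal

variable [BoundedOrder α]

namespace IsCoverGenerated

/-- The elements `[x', w]` of `T(P)` above `[x, y]`, parametrized by their lower endpoint `x'`. -/
def lowerEndpointEquiv (hα : IsCoverGenerated α) {x : WithBot α} {y w : α}
    (hy : x < (y : WithBot α)) (hyw : y < w) :
    (insert x ((↑) '' Set.Ico y w) : Set (WithBot α)) ≃
      {b | TPlt α (TPmk x y hy) b ∧ zmap α b = w} :=
  have mem_iff {x' : WithBot α} := mem_insert_image_coe_Ico_iff (x' := x') hy hyw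
  .ofBijective
    (fun x' => ⟨TPmk x' w (mem_iff.1 x'.2).2, hα.TPlt_TPmk_iff.2 ⟨hyw, (mem_iff.1 x'.2).1⟩, rfl⟩)
    ⟨fun _ _ h => Subtype.ext (left_eq_of_TPmk_eq (congrArg Subtype.val h)), by
      rintro ⟨b, hb, hz⟩
      obtain ⟨x', hw, rfl⟩ := zmap_eq_coe_iff.1 hz
      exact ⟨⟨x', mem_iff.2 ⟨(hα.TPlt_TPmk_iff.1 hb).2, hw⟩⟩, rfl⟩⟩

theorem mk_TPlt_zmap_eq (hα : IsCoverGenerated α) {u v : WithTop α} (huv : u < v) (hv : v ≠ ⊤)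
    {a : TP α} (ha : zmap α a = u) :
    #{b | TPlt α a b ∧ zmap α b = v} = #{t : α | u ≤ t ∧ (t : WithTop α) ≤ v} := by
  lift v to α using hv
  lift u to α using huv.ne_top
  obtain ⟨x, hy, rfl⟩ := zmap_eq_coe_iff.1 ha
  have hyw := WithTop.coe_lt_coe.1 huv
  simp only [WithTop.coe_le_coe]
  rw [← mk_congr (hα.lowerEndpointEquiv hy hyw), mk_insert_image_coe_Ico hy hyw.le, Set.Icc]

theorem mk_TPlt_zmap_eq_top (hα : IsCoverGenerated α) {a : TP α} (ha : zmap α a < ⊤) :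
    #{b | TPlt α a b ∧ zmap α b = ⊤} = 1 := by
  lift zmap α a to α using ha.ne with y hy
  obtain ⟨x, hxy, rfl⟩ := zmap_eq_coe_iff.1 hy.symm
  suffices {b | TPlt α (TPmk x y hxy) b ∧ zmap α b = ⊤} = {TPtop α} by rw [this, mk_singleton]
  ext b
  rw [Set.mem_ofPred_eq, zmap_eq_top_iff, Set.mem_singleton_iff, and_iff_right_iff_imp]
  rintro rfl
  exact hα.TPlt_TPtop hxy

end IsCoverGenerated

theorem setOf_strictChain_eq_pathsFrom {k : ℕ} {f : Fin (k + 1) → WithTop α}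
    (hlast : f (Fin.last k) = ⊤) (a : TP α) :
    {g : Fin (k + 1) → TP α | IsStrictChain (TPlt α) g ∧ g 0 = a ∧ g (Fin.last k) = TPtop α ∧
      ∀ i, zmap α (g i) = f i} = pathsFrom (TPlt α) (fun i b => zmap α b = f i) a := by
  ext g
  have hg : (∀ i, zmap α (g i) = f i) → g (Fin.last k) = TPtop α := fun h =>
    zmap_eq_top_iff.1 ((h _).trans hlast)
  simp only [pathsFrom, Set.mem_ofPred_eq, isStrictChain_iff_succ]
  tauto

/-- Counted by cardinals because `intervalCard` is the junk value `0` on an infinite interval. -/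
theorem tchebyshev_chain_fiber_count_general (hα : IsCoverGenerated α) {k : ℕ}
    {f : Fin (k + 1) → WithTop α} (hchain : StrictMono f) (hlast : f (Fin.last k) = ⊤)
    {a : TP α} (ha : zmap α a = f 0) :
    #{g : Fin (k + 1) → TP α |
        IsStrictChain (TPlt α) g ∧ g 0 = a ∧ g (Fin.last k) = TPtop α ∧
        ∀ i, zmap α (g i) = f i} =
      ∏ i : Fin (k - 1), #{t : α | f ⟨i, by lia⟩ ≤ t ∧ (t : WithTop α) ≤ f ⟨i + 1, by lia⟩} := by
  rw [setOf_strictChain_eq_pathsFrom hlast]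
  rcases k with _ | m
  · exact mk_pathsFrom (c := Fin.elim0) (fun i => i.elim0) ha
  have hstep (i : Fin (m + 1)) : f i.castSucc < f i.succ := hchain i.castSucc_lt_succ
  let c : Fin m → Cardinal := fun i =>
    #{t : α | f i.castSucc.castSucc ≤ t ∧ (t : WithTop α) ≤ f i.castSucc.succ}
  have hc (i : Fin (m + 1)) (b : TP α) (hb : zmap α b = f i.castSucc) :
      #{d | TPlt α b d ∧ zmap α d = f i.succ} = Fin.snoc (α := fun _ => Cardinal) c 1 i := by
    cases i using Fin.lastCases with
    | last =>
      rw [Fin.snoc_last, Fin.succ_last, hlast]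
      exact hα.mk_TPlt_zmap_eq_top (hb.trans_lt ((hstep _).trans_le le_top))
    | cast i =>
      rw [Fin.snoc_castSucc]
      exact hα.mk_TPlt_zmap_eq (hstep i.castSucc) (hstep i.succ).ne_top hb
  rw [mk_pathsFrom hc ha, Fin.prod_snoc, mul_one]
  rfl

end Fibers

end TchebyshevTransform

theorem tchebyshev_chain_fiber_count
    (α : Type) [Fintype α] [PartialOrder α] [BoundedOrder α]
    (rk : α → ℕ) (hrk : IsRankFun α rk)
    (k : ℕ) (f : Fin (k + 1) → WithTop α) (hchain : StrictMono f)
    (h0 : f 0 = ((⊥ : α) : WithTop α)) (hlast : f (Fin.last k) = (⊤ : WithTop α)) :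
    Set.ncard {g : Fin (k + 1) → TP α |
        IsStrictChain (TPlt α) g ∧ g 0 = TPbot α ∧ g (Fin.last k) = TPtop α ∧
        ∀ i, zmap α (g i) = f i} =
      ∏ i : Fin (k - 1),
        intervalCard α (f ⟨i.1, by have := i.2; omega⟩)
          (f ⟨i.1 + 1, by have := i.2; omega⟩) :=
  (congrArg Cardinal.toNat (tchebyshev_chain_fiber_count_general isCoverGenerated_of_finite
    hchain hlast (a := TPbot α) h0.symm)).trans (map_prod Cardinal.toNat _ _)

end Tcheb
end
end

section
/- Let P be an Eulerian poset whose cd-index Ψ(P) has nonnegative integer coefficients when expressed in the monomial basis of ℤ⟨c,d⟩. Then the ab-index Ψ(T(P)) of the Tchebyshev transform T(P) is also a cd-polynomial with nonnegative integer coefficients. -/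
open scoped TensorProduct

noncomputable section

namespace Tcheb

/-!
The ab-index of `T(P)` is `T(Ψ(P)·a)`, where `T` is the Tchebyshev transform on ab-polynomials:
`Ψ(P)·a` is the ab-index of `P ∪ {2̂}`, and both sides satisfy the same recursion over the first
step of a chain, because the elements of `T(P)` above `[x,y]` are `[x,w]`, `[y,w]` and `[z,w]` with
`y < z < w`. Pairing `T(u)` with `σ(u)` makes `T` an entry of a matrix representation `M` of
`R⟨a,b⟩`. For a suitable matrix `G` one has `M(c)·G = G·N_c` and `M(d)·G = G·N_d`, where `N_c` and
`N_d` have nonnegative cd-polynomials as entries, and the vector `M(a)·e₁` that `M(Ψ(P))` is applied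
to is the second column of `G`.
-/

/-! ### The transfer matrix of the Tchebyshev transform -/

section TransferMatrix

variable (R : Type) [CommRing R]

/-- The representation of `R⟨a,b⟩` on pairs of ab-polynomials whose first column at `u` is
`(T(u), σ(u))`. The matrices of the letters encode the expansions of `T` and `σ` according to
the first letter: `T(bu) = 2b·T(u) + (a-b)·σ(u)`, `σ(bu) = b·T(u)`, and left multiplication by
`a - b` commutes with both maps. -/
def transferMatrix : AB R →ₐ[R] Matrix (Fin 2) (Fin 2) (AB R) :=
  MonoidAlgebra.lift R _ ABWord (FreeMonoid.lift fun x =>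
    if x then !![cv R, ev R; bv R, ev R] else !![2 * bv R, ev R; bv R, 0])

theorem transferMatrix_av : transferMatrix R (av R) = !![cv R, ev R; bv R, ev R] := by
  rw [transferMatrix, av, word, MonoidAlgebra.lift_of]
  rfl

theorem transferMatrix_bv : transferMatrix R (bv R) = !![2 * bv R, ev R; bv R, 0] := by
  rw [transferMatrix, bv, word, MonoidAlgebra.lift_of]
  rfl

theorem transferMatrix_ev : transferMatrix R (ev R) = Matrix.diagonal fun _ => ev R := by
  have entry : cv R - 2 * bv R = ev R := by simp only [cv, ev]; noncomm_ring
  conv_lhs => rw [ev, map_sub, transferMatrix_av, transferMatrix_bv]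
  ext1 i j
  fin_cases i <;> fin_cases j <;> simp [entry]

variable {R}

theorem transferMatrix_ev_pow_mul_apply (k : ℕ) (u : AB R) (i j : Fin 2) :
    transferMatrix R (ev R ^ k * u) i j = ev R ^ k * transferMatrix R u i j := by
  rw [map_mul, map_pow, transferMatrix_ev, Matrix.diagonal_pow, Matrix.diagonal_mul, Pi.pow_apply]

theorem transferMatrix_bv_mul_zero (u : AB R) (j : Fin 2) :
    transferMatrix R (bv R * u) 0 j =
      2 * bv R * transferMatrix R u 0 j + ev R * transferMatrix R u 1 j := by
  simp [transferMatrix_bv, Matrix.mul_apply]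

theorem transferMatrix_bv_mul_one (u : AB R) (j : Fin 2) :
    transferMatrix R (bv R * u) 1 j = bv R * transferMatrix R u 0 j := by
  simp [transferMatrix_bv, Matrix.mul_apply]

end TransferMatrix

/-! ### Nonnegative cd-polynomials -/

section Cone

variable (R : Type) [CommRing R]

/-- The cone of nonnegative cd-polynomials: the sums of cd-monomials. -/
def cdCone : Subsemiring (AB R) := Subsemiring.closure {cv R, dv R}

theorem cv_mem_cdCone : cv R ∈ cdCone R := Subsemiring.subset_closure (by simp)

theorem dv_mem_cdCone : dv R ∈ cdCone R := Subsemiring.subset_closure (by simp)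

/-- The intertwiner that turns the transfer matrices of cd-polynomials into matrices with
cd-polynomial entries. Its second column is the first column of `transferMatrix R (av R)`. -/
def cdIntertwiner : Matrix (Fin 2) (Fin 2) (AB R) := !![2, cv R; 1, bv R]

theorem transferMatrix_cv_mul_cdIntertwiner :
    transferMatrix R (cv R) * cdIntertwiner R =
      cdIntertwiner R * !![cv R, dv R; 2, cv R] := by
  conv_lhs => rw [cv, map_add, transferMatrix_av, transferMatrix_bv]
  simp only [cdIntertwiner, add_mul, Matrix.mul_fin_two, Matrix.of_add_of, Matrix.cons_add_cons,
    Matrix.empty_add_empty, cv, dv, ev]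
  congr! 3 <;> noncomm_ring

theorem transferMatrix_dv_mul_cdIntertwiner :
    transferMatrix R (dv R) * cdIntertwiner R =
      cdIntertwiner R * !![2 * dv R, dv R * cv R; 2 * cv R, 2 * dv R] := by
  conv_lhs => rw [dv, map_add, map_mul, map_mul, transferMatrix_av, transferMatrix_bv]
  simp only [cdIntertwiner, add_mul, Matrix.mul_fin_two, Matrix.of_add_of, Matrix.cons_add_cons,
    Matrix.empty_add_empty, cv, dv, ev]
  congr! 3 <;> noncomm_ring

variable {R}

theorem exists_transferMatrix_mul_cdIntertwiner_eq {u : AB R} (hu : u ∈ cdCone R) :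
    ∃ N ∈ (cdCone R).matrix (n := Fin 2),
      transferMatrix R u * cdIntertwiner R = cdIntertwiner R * N := by
  have hc := cv_mem_cdCone R
  have hd := dv_mem_cdCone R
  have h2 : (2 : AB R) ∈ cdCone R := ofNat_mem _ 2
  have h2d : 2 * dv R ∈ cdCone R := mul_mem h2 hd
  induction hu using Subsemiring.closure_induction with
  | mem x hx =>
    rcases hx with rfl | rfl
    · refine ⟨_, fun i j => ?_, transferMatrix_cv_mul_cdIntertwiner R⟩
      fin_cases i <;> fin_cases j <;> assumption
    · refine ⟨_, fun i j => ?_, transferMatrix_dv_mul_cdIntertwiner R⟩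
      fin_cases i <;> fin_cases j
      exacts [h2d, (cdCone R).mul_mem hd hc, (cdCone R).mul_mem h2 hc, h2d]
  | zero => exact ⟨0, zero_mem _, by simp⟩
  | one => exact ⟨1, one_mem _, by simp⟩
  | add x y _ _ ihx ihy =>
    obtain ⟨N, hN, hx⟩ := ihx
    obtain ⟨N', hN', hy⟩ := ihy
    exact ⟨N + N', add_mem hN hN', by rw [map_add, add_mul, mul_add, hx, hy]⟩
  | mul x y _ _ ihx ihy =>
    obtain ⟨N, hN, hx⟩ := ihx
    obtain ⟨N', hN', hy⟩ := ihy
    refine ⟨N * N', mul_mem hN hN', ?_⟩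
    rw [map_mul, mul_assoc, hy, ← mul_assoc, hx, mul_assoc]

theorem transferMatrix_mul_av_mem_cdCone {u : AB R} (hu : u ∈ cdCone R) :
    transferMatrix R (u * av R) 0 0 ∈ cdCone R := by
  obtain ⟨N, hN, h⟩ := exists_transferMatrix_mul_cdIntertwiner_eq hu
  have firstColumn : transferMatrix R (u * av R) 0 0 = 2 * N 0 1 + cv R * N 1 1 := calc
    transferMatrix R (u * av R) 0 0 = (transferMatrix R u * cdIntertwiner R) 0 1 := by
      simp [transferMatrix_av, cdIntertwiner, Matrix.mul_apply]
    _ = 2 * N 0 1 + cv R * N 1 1 := by rw [h]; simp [cdIntertwiner, Matrix.mul_apply]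
  rw [firstColumn]
  exact add_mem (mul_mem (ofNat_mem _ 2) (hN 0 1)) (mul_mem (cv_mem_cdCone R) (hN 1 1))

end Cone

/-! ### The ab-index by its first step -/

section AbIndex

variable {β : Type} {lt : β → β → Prop} {rk : β → ℕ}

theorem isStrictChain_cons [IsTrans β lt] {n : ℕ} {x : β} {f : Fin (n + 1) → β} :
    IsStrictChain lt (Fin.cons x f : Fin (n + 2) → β) ↔ lt x (f 0) ∧ IsStrictChain lt f :=
  liftFun_vecCons lt

theorem IsStrictChain.injective [Std.Irrefl lt] {n : ℕ} {f : Fin (n + 1) → β}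
    (hf : IsStrictChain lt f) : Function.Injective f :=
  .of_lt_imp_ne fun i j hij h => irrefl_of lt (f j) (h ▸ hf i j hij)

variable (R : Type) [CommRing R]

theorem chainWt_cons {n : ℕ} (x : β) (f : Fin (n + 2) → β) :
    chainWt R rk (Fin.cons x f : Fin (n + 3) → β) =
      ev R ^ (rk (f 0) - rk x - 1) * (bv R * chainWt R rk f) := by
  calc chainWt R rk (Fin.cons x f : Fin (n + 3) → β)
    _ = (List.intersperse (bv R) (ev R ^ (rk (f 0) - rk x - 1) ::
          List.ofFn fun i : Fin (n + 1) =>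
            ev R ^ (rk (f i.succ) - rk (f i.castSucc) - 1))).prod := by
      rw [chainWt, List.ofFn_succ]
      rfl
    _ = _ := by
      rw [List.ofFn_succ, List.intersperse_cons_cons, List.prod_cons, List.prod_cons, chainWt,
        List.ofFn_succ]

variable [Fintype β]

variable (lt) in
open Classical in
/-- The chains `x = x₀ < x₁ < ⋯ < x_n = t` of length `n` from `x` to `t`. -/
def chainsBetween (x t : β) (n : ℕ) : Finset (Fin (n + 1) → β) :=
  {f | IsStrictChain lt f ∧ f 0 = x ∧ f (Fin.last n) = t}

theorem mem_chainsBetween {x t : β} {n : ℕ} {f : Fin (n + 1) → β} :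
    f ∈ chainsBetween lt x t n ↔ IsStrictChain lt f ∧ f 0 = x ∧ f (Fin.last n) = t := by
  simp [chainsBetween]

theorem chainsBetween_eq_empty_of_card_le [Std.Irrefl lt] {x t : β} {n : ℕ}
    (hn : Fintype.card β ≤ n) : chainsBetween lt x t n = ∅ := by
  refine Finset.eq_empty_of_forall_notMem fun f hf => ?_
  have card_le := Fintype.card_le_of_injective f (mem_chainsBetween.mp hf).1.injective
  rw [Fintype.card_fin] at card_le
  omega

theorem chainsBetween_one {x t : β} (h : lt x t) : chainsBetween lt x t 1 = {![x, t]} := by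
  have chain_iff {f : Fin 2 → β} : IsStrictChain lt f ↔ lt (f 0) (f 1) := by
    simp [IsStrictChain, Fin.forall_fin_two]
  ext f
  rw [mem_chainsBetween, Finset.mem_singleton, funext_iff, Fin.forall_fin_two, chain_iff]
  exact ⟨fun hf => hf.2, fun hf => ⟨by rwa [hf.1, hf.2], hf⟩⟩

open Classical in
theorem sum_chainsBetween_add_two [IsTrans β lt] {M : Type*} [AddCommMonoid M] (x t : β) (n : ℕ)
    (φ : (Fin (n + 3) → β) → M) :
    ∑ f ∈ chainsBetween lt x t (n + 2), φ f =
      ∑ y with lt x y ∧ lt y t, ∑ g ∈ chainsBetween lt y t (n + 1), φ (Fin.cons x g) := by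
  rw [Finset.sum_sigma']
  refine Finset.sum_nbij' (fun f => ⟨f 1, Fin.tail f⟩) (fun p => Fin.cons x p.2) ?_ ?_ ?_ ?_ ?_
  · intro f hf
    obtain ⟨chain, rfl, rfl⟩ := mem_chainsBetween.mp hf
    obtain ⟨first, tail⟩ := isStrictChain_cons.mp (by rwa [Fin.cons_self_tail])
    simp only [Finset.mem_sigma, Finset.mem_filter, Finset.mem_univ, true_and, mem_chainsBetween]
    exact ⟨⟨first, chain 1 (Fin.last _) (Fin.one_lt_last)⟩, tail, rfl, rfl⟩
  · rintro ⟨y, g⟩ hg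
    simp only [Finset.mem_sigma, Finset.mem_filter, Finset.mem_univ, true_and,
      mem_chainsBetween] at hg
    obtain ⟨⟨hxy, -⟩, chain, rfl, rfl⟩ := hg
    exact mem_chainsBetween.mpr ⟨isStrictChain_cons.mpr ⟨hxy, chain⟩, rfl, rfl⟩
  · intro f hf
    rw [← (mem_chainsBetween.mp hf).2.1, Fin.cons_self_tail]
  · rintro ⟨y, g⟩ hg
    obtain rfl : g 0 = y := (mem_chainsBetween.mp (Finset.mem_sigma.mp hg).2).2.1
    rfl
  · intro f hf
    rw [← (mem_chainsBetween.mp hf).2.1, Fin.cons_self_tail]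

theorem PsiRel_eq_sum_range [Std.Irrefl lt] {N : ℕ} (hN : Fintype.card β ≤ N) (x t : β) :
    PsiRel R lt rk x t = ∑ n ∈ Finset.range N, ∑ f ∈ chainsBetween lt x t n, chainWt R rk f := by
  have finsum_chains (n : ℕ) : (∑ᶠ (f : Fin (n + 1) → β)
      (_ : IsStrictChain lt f ∧ f 0 = x ∧ f (Fin.last n) = t), chainWt R rk f) =
        ∑ f ∈ chainsBetween lt x t n, chainWt R rk f := by
    simp_rw [← mem_chainsBetween]
    exact finsum_mem_coe_finset _ _
  simp_rw [PsiRel, finsum_chains]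
  refine finsum_eq_sum_of_support_subset _ fun n hn => ?_
  simp only [Finset.coe_range, Set.mem_Iio]
  contrapose! hn
  simp [chainsBetween_eq_empty_of_card_le (hN.trans hn)]

open Classical in
theorem PsiRel_of_lt [IsStrictOrder β lt] {x t : β} (h : lt x t) :
    PsiRel R lt rk x t = ev R ^ (rk t - rk x - 1) +
      ∑ y with lt x y ∧ lt y t, ev R ^ (rk y - rk x - 1) * (bv R * PsiRel R lt rk y t) := by
  set N := Fintype.card β
  have no_trivial_chain {y : β} (hy : lt y t) : chainsBetween lt y t 0 = ∅ := by
    refine Finset.eq_empty_of_forall_notMem fun f hf => ?_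
    obtain ⟨-, rfl, rfl⟩ := mem_chainsBetween.mp hf
    exact irrefl_of lt _ hy
  have PsiRel_eq {y : β} (hy : lt y t) {k : ℕ} (hk : N ≤ k + 1) : PsiRel R lt rk y t =
      ∑ n ∈ Finset.range k, ∑ f ∈ chainsBetween lt y t (n + 1), chainWt R rk f := by
    rw [PsiRel_eq_sum_range R hk, Finset.sum_range_succ', no_trivial_chain hy, Finset.sum_empty,
      add_zero]
  rw [PsiRel_eq h (k := N + 1) (by omega), Finset.sum_range_succ', chainsBetween_one h,
    Finset.sum_singleton, add_comm]
  congr 1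
  · simp [chainWt]
  · simp_rw [sum_chainsBetween_add_two]
    rw [Finset.sum_comm]
    refine Finset.sum_congr rfl fun y hy => ?_
    rw [PsiRel_eq (Finset.mem_filter.mp hy).2.2 (k := N) (by omega)]
    simp_rw [Finset.mul_sum]
    refine Finset.sum_congr rfl fun n _ => Finset.sum_congr rfl fun g hg => ?_
    rw [chainWt_cons, (mem_chainsBetween.mp hg).2.1]

open Classical in
theorem PsiRel_some_none {β : Type} [Fintype β] {lt : Option β → Option β → Prop}
    [IsStrictOrder (Option β) lt] {rk : Option β → ℕ} (hlt : ∀ y, lt (some y) none) (x : β) :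
    PsiRel R lt rk (some x) none = ev R ^ (rk none - rk (some x) - 1) +
      ∑ y with lt (some x) (some y),
        ev R ^ (rk (some y) - rk (some x) - 1) * (bv R * PsiRel R lt rk (some y) none) := by
  rw [PsiRel_of_lt R (hlt x), Finset.sum_filter, Fintype.sum_option, Finset.sum_filter]
  simp [hlt, irrefl_of]

end AbIndex

/-! ### Adjoining a new maximum -/

section AdjoinTop

variable (R : Type) [CommRing R] {α : Type} [PartialOrder α] [OrderTop α]

/-- The rank function of `P ∪ {2̂}`, where `2̂` covers the maximum of `P`. -/
def withTopRk {α : Type} [LE α] [OrderTop α] (rk : α → ℕ) : WithTop α → ℕ :=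
  WithTop.recTopCoe (rk ⊤ + 1) rk

/-- The ab-index of the interval `[x, 2̂]` of `P ∪ {2̂}`. -/
def psiWithTop (rk : α → ℕ) (x : α) : AB R :=
  PsiRel R (· < ·) (withTopRk rk) (x : WithTop α) ⊤

open Classical in
theorem psiWithTop_eq [Fintype α] (rk : α → ℕ) (x : α) :
    psiWithTop R rk x = ev R ^ (rk ⊤ - rk x) +
      ∑ y with x < y, ev R ^ (rk y - rk x - 1) * (bv R * psiWithTop R rk y) := by
  have : IsStrictOrder (Option α) ((· < ·) : WithTop α → WithTop α → Prop) :=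
    inferInstanceAs (IsStrictOrder (WithTop α) (· < ·))
  have step := PsiRel_some_none R (lt := ((· < ·) : WithTop α → WithTop α → Prop))
    (rk := withTopRk rk) WithTop.coe_lt_top x
  have top_exponent : rk ⊤ - rk x = rk ⊤ + 1 - rk x - 1 := by omega
  rw [top_exponent]
  refine step.trans ?_
  congr! 3
  exact WithTop.coe_lt_coe

theorem psiWithTop_top [Finite α] (rk : α → ℕ) : psiWithTop R rk ⊤ = 1 := by
  have := Fintype.ofFinite α
  rw [psiWithTop_eq]
  simp

theorem psiWithTop_eq_mul_av [Finite α] {rk : α → ℕ} (hrk : StrictMono rk) {x : α} (hx : x < ⊤) :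
    psiWithTop R rk x = PsiRel R (· < ·) rk x ⊤ * av R := by
  have := Fintype.ofFinite α
  classical
  induction x using WellFoundedGT.induction with | ind x ih =>
  have above : Finset.univ.filter (x < ·) =
      insert ⊤ (Finset.univ.filter fun y => x < y ∧ y < ⊤) := by
    ext y
    rcases eq_or_ne y ⊤ with rfl | hy <;> simp [*, lt_top_iff_ne_top]
  have top_notMem : (⊤ : α) ∉ Finset.univ.filter fun y => x < y ∧ y < ⊤ := by simp
  obtain ⟨k, hk⟩ := Nat.exists_eq_add_of_lt (hrk hx)
  have hk' : rk ⊤ - rk x = k + 1 := by omega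
  have av_eq : av R = ev R + bv R := by simp [ev]
  rw [psiWithTop_eq, above, Finset.sum_insert top_notMem, psiWithTop_top, PsiRel_of_lt R hx,
    add_mul, ← add_assoc, Finset.sum_mul, hk']
  congr 1
  · rw [mul_one, Nat.add_sub_cancel, pow_succ, ← mul_add, av_eq]
  · refine Finset.sum_congr rfl fun y hy => ?_
    obtain ⟨hxy, hy⟩ := (Finset.mem_filter.mp hy).2
    rw [ih y hxy hy, mul_assoc, mul_assoc]

variable {R}

open Classical in
theorem transferMatrix_psiWithTop_one [Fintype α] (rk : α → ℕ) (x : α) :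
    transferMatrix R (psiWithTop R rk x) 1 0 = ∑ y with x < y,
      ev R ^ (rk y - rk x - 1) * (bv R * transferMatrix R (psiWithTop R rk y) 0 0) := by
  have pow_entry := transferMatrix_ev_pow_mul_apply (R := R) (rk ⊤ - rk x) 1 1 0
  rw [psiWithTop_eq, map_add, map_sum, Matrix.add_apply, Matrix.sum_apply]
  simp_rw [transferMatrix_ev_pow_mul_apply, transferMatrix_bv_mul_one]
  simpa using pow_entry

open Classical in
theorem transferMatrix_psiWithTop_zero [Fintype α] {rk : α → ℕ} (hrk : StrictMono rk) (x : α) :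
    transferMatrix R (psiWithTop R rk x) 0 0 = ev R ^ (rk ⊤ - rk x) +
      (2 • (∑ y with x < y,
          ev R ^ (rk y - rk x - 1) * (bv R * transferMatrix R (psiWithTop R rk y) 0 0)) +
        ∑ y with x < y, ∑ z with y < z,
          ev R ^ (rk z - rk x - 1) * (bv R * transferMatrix R (psiWithTop R rk z) 0 0)) := by
  have pow_entry : transferMatrix R (ev R ^ (rk ⊤ - rk x)) 0 0 = ev R ^ (rk ⊤ - rk x) := by
    simpa using transferMatrix_ev_pow_mul_apply (R := R) (rk ⊤ - rk x) 1 0 0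
  rw [psiWithTop_eq, map_add, map_sum, Matrix.add_apply, Matrix.sum_apply, pow_entry,
    Finset.smul_sum, ← Finset.sum_add_distrib]
  congr 1
  refine Finset.sum_congr rfl fun y hy => ?_
  have hxy := hrk (Finset.mem_filter.mp hy).2
  rw [transferMatrix_ev_pow_mul_apply, transferMatrix_bv_mul_zero, mul_add, mul_assoc 2, two_mul,
    mul_add, ← two_nsmul]
  congr 1
  rw [transferMatrix_psiWithTop_one, Finset.mul_sum, Finset.mul_sum]
  refine Finset.sum_congr rfl fun z hz => ?_
  have hyz := hrk (Finset.mem_filter.mp hz).2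
  have exponents : rk z - rk x - 1 = (rk y - rk x - 1) + 1 + (rk z - rk y - 1) := by omega
  rw [exponents, pow_add, pow_succ, mul_assoc, mul_assoc]

end AdjoinTop

theorem IsRankFun.strictMono {α : Type} [Finite α] [PartialOrder α] [OrderBot α] {rk : α → ℕ}
    (hrk : IsRankFun α rk) : StrictMono rk := by
  have := Fintype.ofFinite α
  classical
  let := Fintype.toLocallyFiniteOrder (α := α)
  refine (strictMono_iff_forall_covBy rk).mpr fun x y hxy => ?_
  rw [hrk.2 x y hxy]
  exact Nat.lt_succ_self _

/-! ### The order of the Tchebyshev transform -/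

section TPOrder

variable {α : Type} [PartialOrder α] [BoundedOrder α]

/-- An explicit description of the order of `T(P)`: `[x,y] < [z,w]` iff `y < w` and either
`z = x` or `y ≤ z`. -/
def intervalLT : TP α → TP α → Prop
  | some p, some q => p.1.2 < q.1.2 ∧ (q.1.1 = p.1.1 ∨ (p.1.2 : WithBot α) ≤ q.1.1)
  | some _, none => True
  | none, _ => False

instance : IsStrictOrder (TP α) intervalLT where
  irrefl
    | some _, h => h.1.false
    | none, h => h
  trans
    | some p, some q, some r, ⟨hpq, hq⟩, ⟨hqr, hr⟩ => by
      refine ⟨hpq.trans hqr, ?_⟩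
      rcases hr with hr | hr
      · rwa [hr]
      · exact .inr ((WithBot.coe_le_coe.mpr hpq.le).trans hr)
    | some _, some _, none, _, _ => trivial

theorem TPcov.intervalLT {p q : TP α} (h : TPcov α p q) : intervalLT p q := by
  cases h with
  | up _ _ hc => exact ⟨hc.lt, .inr le_rfl⟩
  | same _ _ hc => exact ⟨hc.lt, .inl rfl⟩
  | top _ => trivial

variable [Finite α]

theorem TPlt_of_lt_right {x : WithBot α} {y w : α} (hx : x < y) (hyw : y < w) :
    TPlt α (some ⟨(x, y), hx⟩) (some ⟨(x, w), hx.trans (WithBot.coe_lt_coe.mpr hyw)⟩) := by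
  induction y using WellFoundedGT.induction with | ind y ih =>
  obtain ⟨v, hyv, hvw⟩ := exists_covBy_le_of_lt hyw
  have hxv : x < v := hx.trans (WithBot.coe_lt_coe.mpr hyv.lt)
  have step : TPlt α (some ⟨(x, y), hx⟩) (some ⟨(x, v), hxv⟩) := .single (.same _ _ hyv)
  rcases hvw.eq_or_lt with rfl | hvw
  · exact step
  · exact step.trans (ih v hyv.lt hxv hvw)

theorem TPlt_of_right_eq_left {x : WithBot α} {y w : α} (hx : x < y) (hyw : y < w) :
    TPlt α (some ⟨(x, y), hx⟩) (some ⟨(y, w), WithBot.coe_lt_coe.mpr hyw⟩) := by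
  obtain ⟨v, hyv, hvw⟩ := exists_covBy_le_of_lt hyw
  have hyv' : (y : WithBot α) < v := WithBot.coe_lt_coe.mpr hyv.lt
  have step : TPlt α (some ⟨(x, y), hx⟩) (some ⟨(y, v), hyv'⟩) := .single (.up _ _ hyv)
  rcases hvw.eq_or_lt with rfl | hvw
  · exact step
  · exact step.trans (TPlt_of_lt_right hyv' hvw)

theorem TPlt_top (p : TPel α) : TPlt α (some p) none := by
  obtain ⟨⟨x, y⟩, hx⟩ := p
  rcases eq_top_or_lt_top y with rfl | hy
  · exact .single (.top hx)
  · exact (TPlt_of_lt_right hx hy).tail (.top _)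

theorem TPlt_of_intervalLT : ∀ {p q : TP α}, intervalLT p q → TPlt α p q
  | some ⟨(x, y), hx⟩, some ⟨(z, w), hz⟩, ⟨hyw, hzx⟩ => by
    rcases hzx with rfl | hyz
    · exact TPlt_of_lt_right hx hyw
    · obtain ⟨z, rfl, hyz'⟩ := WithBot.coe_le_iff.mp hyz
      have hzw : z < w := WithBot.coe_lt_coe.mp hz
      rcases hyz'.eq_or_lt with rfl | hyz'
      · exact TPlt_of_right_eq_left hx hzw
      · exact (TPlt_of_lt_right hx hyz').trans (TPlt_of_right_eq_left _ hzw)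
  | some p, none, _ => TPlt_top p

theorem TPlt_eq_intervalLT : TPlt α = intervalLT := by
  ext p q
  exact ⟨Relation.transGen_minimal (fun _ _ => TPcov.intervalLT) p q, TPlt_of_intervalLT⟩

end TPOrder

section SumTPel

variable {α : Type} [Fintype α] [PartialOrder α]

open Classical in
theorem filter_eq_or_coe_le (x : WithBot α) (y : α) :
    Finset.univ.filter (fun z : WithBot α => z = x ∨ y ≤ z) =
      insert x (insert (y : WithBot α) ((Finset.univ.filter (y < ·)).image (↑))) := by
  ext z
  simp [le_iff_eq_or_lt, WithBot.lt_iff_exists, and_comm, eq_comm (a := z)]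

open Classical in
instance : Fintype (TPel α) :=
  inferInstanceAs (Fintype {p : WithBot α × α // p.1 < (p.2 : WithBot α)})

open Classical in
theorem sum_TPel {M : Type*} [AddCommMonoid M] (f : WithBot α × α → M) :
    ∑ q : TPel α, f q.1 = ∑ z : WithBot α, ∑ w : α, if z < w then f (z, w) else 0 := by
  rw [← Fintype.sum_prod_type' (f := fun (z : WithBot α) (w : α) => if z < w then f (z, w) else 0),
    ← Finset.sum_filter]
  exact (Finset.sum_subtype _ (by simp) f).symm

open Classical in
/-- The elements of `T(P)` above `[x,y]` other than `1̂` are the `[x,w]` and `[y,w]` with `y < w`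
and the `[z,w]` with `y < z < w`. -/
theorem sum_intervalLT {M : Type*} [AddCommMonoid M] (p : TPel α) (g : α → M) :
    ∑ q : TPel α with intervalLT (some p) (some q), g q.1.2 =
      2 • ∑ w with p.1.2 < w, g w + ∑ z with p.1.2 < z, ∑ w with z < w, g w := by
  obtain ⟨⟨x, y⟩, hx⟩ := p
  have le_irrelevant {z : WithBot α} (hz : z ≤ y) :
      Finset.univ.filter (fun w : α => z < w ∧ y < w) = Finset.univ.filter (y < ·) :=
    Finset.filter_congr fun w _ => and_iff_right_of_imp fun hyw =>
      hz.trans_lt (WithBot.coe_lt_coe.mpr hyw)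
  have lt_irrelevant {z : α} (hz : y < z) :
      Finset.univ.filter (fun w : α => (z : WithBot α) < w ∧ y < w) = Finset.univ.filter (z < ·) :=
    Finset.filter_congr fun w _ => by
      rw [WithBot.coe_lt_coe, and_iff_left_of_imp hz.trans]
  have x_notMem : x ∉ insert (y : WithBot α) ((Finset.univ.filter (y < ·)).image (↑)) := by
    simp only [Finset.mem_insert, Finset.mem_image, Finset.mem_filter, not_or]
    refine ⟨hx.ne, ?_⟩
    rintro ⟨u, ⟨-, hyu⟩, rfl⟩
    exact hyu.asymm (WithBot.coe_lt_coe.mp hx)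
  calc ∑ q : TPel α with intervalLT (some ⟨(x, y), hx⟩) (some q), g q.1.2
    _ = ∑ q : TPel α, if y < q.1.2 ∧ (q.1.1 = x ∨ y ≤ q.1.1) then g q.1.2 else 0 := by
      rw [Finset.sum_filter]
      congr!
    _ = ∑ z : WithBot α with z = x ∨ y ≤ z,
          ∑ w ∈ Finset.univ.filter fun w : α => z < w ∧ y < w, g w := by
      rw [sum_TPel fun q => if y < q.2 ∧ (q.1 = x ∨ y ≤ q.1) then g q.2 else 0]
      simp_rw [Finset.sum_filter]
      refine Finset.sum_congr rfl fun z _ => ?_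
      by_cases hz : z = x ∨ y ≤ z <;> simp [hz, ite_and]
    _ = ∑ w with y < w, g w + (∑ w with y < w, g w + ∑ z with y < z, ∑ w with z < w, g w) := by
      rw [filter_eq_or_coe_le, Finset.sum_insert x_notMem, Finset.sum_insert (by simp),
        Finset.sum_image WithBot.coe_injective.injOn, le_irrelevant (le_of_lt hx),
        le_irrelevant le_rfl]
      congr! 2
      refine Finset.sum_congr rfl fun z hz => ?_
      rw [lt_irrelevant (Finset.mem_filter.mp hz).2]
    _ = _ := by rw [← add_assoc, two_nsmul]

end SumTPel

/-! ### The ab-index of the Tchebyshev transform -/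

section Tchebyshev

variable {R : Type} [CommRing R] {α : Type} [PartialOrder α] [BoundedOrder α]

open Classical in
theorem PsiRel_TP_eq [Fintype α] (rk : α → ℕ) (p : TPel α) :
    PsiRel R (TPlt α) (TPrk α rk) (some p) (TPtop α) = ev R ^ (rk ⊤ - rk p.1.2) +
      ∑ q : TPel α with intervalLT (some p) (some q), ev R ^ (rk q.1.2 - rk p.1.2 - 1) *
        (bv R * PsiRel R (TPlt α) (TPrk α rk) (some q) (TPtop α)) := by
  rw [TPlt_eq_intervalLT]
  have : IsStrictOrder (Option (TPel α)) (intervalLT (α := α)) :=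
    inferInstanceAs (IsStrictOrder (TP α) intervalLT)
  have top_exponent : rk ⊤ - rk p.1.2 = rk ⊤ + 1 - rk p.1.2 - 1 := by omega
  rw [top_exponent]
  exact PsiRel_some_none R (lt := intervalLT (α := α)) (rk := TPrk α rk) (fun _ => trivial) p

theorem PsiRel_TP_eq_transferMatrix [Finite α] {rk : α → ℕ} (hrk : StrictMono rk) (p : TPel α) :
    PsiRel R (TPlt α) (TPrk α rk) (some p) (TPtop α) =
      transferMatrix R (psiWithTop R rk p.1.2) 0 0 := by
  have := Fintype.ofFinite α
  classical
  induction h : p.1.2 using WellFoundedGT.induction generalizing p with | ind y ih =>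
  subst h
  rw [PsiRel_TP_eq, transferMatrix_psiWithTop_zero hrk, ← sum_intervalLT]
  congr 1
  refine Finset.sum_congr rfl fun q hq => ?_
  rw [ih _ (Finset.mem_filter.mp hq).2.1 q rfl]

theorem tchebyshev_preserves_nonneg_cd_general [Finite α] {rk : α → ℕ} (hrk : StrictMono rk)
    (hpos : PsiRel R (· < ·) rk (⊥ : α) ⊤ ∈ cdCone R) :
    PsiRel R (TPlt α) (TPrk α rk) (TPbot α) (TPtop α) ∈ cdCone R := by
  have from_bot : PsiRel R (TPlt α) (TPrk α rk) (TPbot α) (TPtop α) =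
      transferMatrix R (psiWithTop R rk ⊥) 0 0 := PsiRel_TP_eq_transferMatrix hrk _
  rw [from_bot]
  rcases (bot_le : (⊥ : α) ≤ ⊤).eq_or_lt with bot_eq_top | bot_lt_top
  · simp [bot_eq_top, psiWithTop_top, one_mem]
  · rw [psiWithTop_eq_mul_av R hrk bot_lt_top]
    exact transferMatrix_mul_av_mem_cdCone hpos

end Tchebyshev

theorem tchebyshev_preserves_nonneg_cd
    (α : Type) [Fintype α] [PartialOrder α] [BoundedOrder α]
    (rk : α → ℕ) (hrk : IsRankFun α rk) (heu : IsEulerian α rk)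
    (hpos : PsiRel ℤ (· < ·) rk (⊥ : α) (⊤ : α) ∈
      AddSubmonoid.closure
        ((Submonoid.closure ({cv ℤ, dv ℤ} : Set (AB ℤ)) : Submonoid (AB ℤ)) :
          Set (AB ℤ))) :
    PsiRel ℤ (TPlt α) (TPrk α rk) (TPbot α) (TPtop α) ∈
      AddSubmonoid.closure
        ((Submonoid.closure ({cv ℤ, dv ℤ} : Set (AB ℤ)) : Submonoid (AB ℤ)) :
          Set (AB ℤ)) := by
  simp only [← Subsemiring.mem_closure_iff] at hpos ⊢
  exact tchebyshev_preserves_nonneg_cd_general hrk.strictMono hpos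

end Tcheb
end
end

section
/- For every ab-polynomial u ∈ ℤ⟨a,b⟩, the Tchebyshev transform satisfies T((a−b)·u) = (a−b)·T(u); consequently T((c²−2d)·u) = (c²−2d)·T(u), where c = a + b and d = ab + ba. -/
open scoped TensorProduct

noncomputable section

namespace Tcheb

/-!
Write `e = a - b`. The coproduct satisfies the Leibniz rule `Δ(x·u) = 1 ⊗ u + (x ⊗ 1)·Δ(u)` for
each letter `x`, so the terms `1 ⊗ u` cancel and `Δ(e·u) = (e ⊗ 1)·Δ(u)`. As `A(e) = 1`, this makes
`A` and `C` invariant under `u ↦ e·u`, whence `κ(e·u) = e·κ(u)` and `ν(e·u) = e·ν(u)`. Splitting off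
the first cut gives `T(u) = κ(u) + Σ_u ν(u₍₁₎)·b·T(u₍₂₎)`; evaluated at `e·u`, the factor `e` enters
only `κ` and the first `ν`, and comes out on the left. Finally `c² - 2d = e²`.
-/

section Words

variable {R : Type} [CommRing R]

theorem onBasis_word {M : Type} [AddCommMonoid M] [Module R M] (f : List Bool → M) (w : List Bool) :
    onBasis R f (word R w) = f w := by
  simp [onBasis, word, MonoidAlgebra.of, MonoidAlgebra.coeffLinearEquiv]

theorem linearMap_ext_word {M : Type*} [AddCommMonoid M] [Module R M] {f g : AB R →ₗ[R] M}
    (h : ∀ w, f (word R w) = g (word R w)) : f = g := by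
  refine LinearMap.ext fun u => ?_
  induction u using MonoidAlgebra.induction_on with
  | of w => exact h w.toList
  | add u v hu hv => rw [map_add, map_add, hu, hv]
  | smul r u hu => rw [map_smul, map_smul, hu]

variable (R)

theorem word_nil : word R [] = 1 := map_one _

theorem word_cons (x : Bool) (w : List Bool) : word R (x :: w) = word R [x] * word R w := by
  rw [word, word, word, ← map_mul]
  rfl

theorem ev_mul_word (w : List Bool) :
    ev R * word R w = word R (true :: w) - word R (false :: w) := by
  rw [word_cons R true, word_cons R false, ← sub_mul]
  rfl

theorem Amap_ev : Amap R (ev R) = 1 := by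
  simp [Amap, ev, av, bv, word]

theorem cv_sq_sub_two_mul_dv : cv R ^ 2 - 2 * dv R = ev R ^ 2 := by
  simp only [cv, dv, ev]
  noncomm_ring

end Words

section Coproduct

variable (R : Type) [CommRing R]

theorem Delta_word_cons (x : Bool) (w : List Bool) :
    Delta R (word R (x :: w)) =
      (LinearMap.mulLeft R (word R [x])).rTensor (AB R) (Delta R (word R w)) +
        1 ⊗ₜ[R] word R w := by
  simp only [Delta, onBasis_word, List.length_cons, Finset.sum_range_succ', map_sum,
    List.take_succ_cons, List.drop_succ_cons, List.take_zero, List.drop_zero, word_nil,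
    LinearMap.rTensor_tmul, LinearMap.mulLeft_apply, ← word_cons]

theorem Delta_ev_mul (u : AB R) :
    Delta R (ev R * u) = (LinearMap.mulLeft R (ev R)).rTensor (AB R) (Delta R u) := by
  suffices h : Delta R ∘ₗ LinearMap.mulLeft R (ev R) =
      (LinearMap.mulLeft R (ev R)).rTensor (AB R) ∘ₗ Delta R from LinearMap.congr_fun h u
  refine linearMap_ext_word fun w => ?_
  have hev : LinearMap.mulLeft R (ev R) =
      LinearMap.mulLeft R (word R [true]) - LinearMap.mulLeft R (word R [false]) :=
    LinearMap.ext fun v => sub_mul _ _ v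
  rw [LinearMap.comp_apply, LinearMap.comp_apply, LinearMap.mulLeft_apply, ev_mul_word, map_sub,
    Delta_word_cons, Delta_word_cons, add_sub_add_right_eq_sub, hev, LinearMap.rTensor_sub,
    LinearMap.sub_apply]

theorem Amap_ev_mul (u : AB R) : Amap R (ev R * u) = Amap R u := by
  rw [map_mul, Amap_ev, one_mul]

theorem Cmap_ev_mul (u : AB R) : Cmap R (ev R * u) = Cmap R u := by
  have hA : (Amap R).toLinearMap ∘ₗ LinearMap.mulLeft R (ev R) = (Amap R).toLinearMap :=
    LinearMap.ext (Amap_ev_mul R)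
  simp only [Cmap, LinearMap.add_apply, LinearMap.smul_apply, LinearMap.comp_apply,
    AlgHom.toLinearMap_apply, Amap_ev_mul, Delta_ev_mul, LinearMap.map_rTensor, hA]

end Coproduct

section DegreeTwist

variable {R : Type} [CommRing R]

/-- The common form of `κ` and `ν`: the linear map sending a homogeneous `u` to
`φ(u)·(a-b)^(deg u)`. -/
def evTwist (φ : AB R →ₗ[R] R) : AB R →ₗ[R] AB R :=
  onBasis R fun w => φ (word R w) • ev R ^ w.length

theorem evTwist_ev_mul {φ : AB R →ₗ[R] R} (hφ : ∀ u, φ (ev R * u) = φ u) (u : AB R) :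
    evTwist φ (ev R * u) = ev R * evTwist φ u := by
  suffices h : evTwist φ ∘ₗ LinearMap.mulLeft R (ev R) =
      LinearMap.mulLeft R (ev R) ∘ₗ evTwist φ from LinearMap.congr_fun h u
  refine linearMap_ext_word fun w => ?_
  calc evTwist φ (ev R * word R w)
      = φ (word R (true :: w)) • ev R ^ (w.length + 1) -
          φ (word R (false :: w)) • ev R ^ (w.length + 1) := by
        simp only [ev_mul_word, map_sub, evTwist, onBasis_word, List.length_cons]
    _ = φ (word R w) • ev R ^ (w.length + 1) := by
        rw [← sub_smul, ← map_sub, ← ev_mul_word, hφ]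
    _ = ev R * evTwist φ (word R w) := by
        rw [evTwist, onBasis_word, pow_succ', mul_smul_comm]

variable (R)

theorem kappa_ev_mul (u : AB R) : kappa R (ev R * u) = ev R * kappa R u :=
  evTwist_ev_mul (φ := (Amap R).toLinearMap) (Amap_ev_mul R) u

theorem nuMap_ev_mul (u : AB R) : nuMap R (ev R * u) = ev R * nuMap R u :=
  evTwist_ev_mul (Cmap_ev_mul R) u

end DegreeTwist

theorem mul'_rTensor_mulLeft {S A : Type*} [CommSemiring S] [Semiring A] [Algebra S A] (a : A)
    (z : A ⊗[S] A) :
    LinearMap.mul' S A ((LinearMap.mulLeft S a).rTensor A z) = a * LinearMap.mul' S A z := by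
  suffices h : LinearMap.mul' S A ∘ₗ (LinearMap.mulLeft S a).rTensor A =
      LinearMap.mulLeft S a ∘ₗ LinearMap.mul' S A from LinearMap.congr_fun h z
  exact TensorProduct.ext' fun x y => mul_assoc a x y

section Positions

/-- The elements of a subset of `{0, …, n-1}` in increasing order: the cut positions passed to
`segments` in the definition of `Tmap`. -/
def positions {n : ℕ} (S : Finset (Fin n)) : List ℕ := (S.sort (· ≤ ·)).map Fin.val

theorem positions_map_succ {n : ℕ} (S : Finset (Fin n)) :
    positions (S.map (Fin.succEmb n)) = (positions S).map (· + 1) := by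
  have hsort : (S.map (Fin.succEmb n)).sort (· ≤ ·) = (S.sort (· ≤ ·)).map Fin.succ :=
    (Fin.strictMono_succ.strictMonoOn _).map_finsetSort.symm
  simp only [positions, hsort, List.map_map, Function.comp_def, Fin.val_succ]

theorem positions_insert_zero_map_succ {n : ℕ} (S : Finset (Fin n)) :
    positions (insert 0 (S.map (Fin.succEmb n))) = 0 :: (positions S).map (· + 1) := by
  rw [← positions_map_succ, positions, Finset.sort_insert _ (fun i _ => Fin.zero_le i) (by simp)]
  rfl

variable {M : Type*} [AddCommMonoid M]

theorem sum_finset_fin_succ (n : ℕ) (f : Finset (Fin (n + 1)) → M) :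
    ∑ S, f S = ∑ S : Finset (Fin n), f (S.map (Fin.succEmb n)) +
      ∑ S : Finset (Fin n), f (insert 0 (S.map (Fin.succEmb n))) := by
  have hinj : Function.Injective fun S : Finset (Fin n) => S.image Fin.succ :=
    Finset.image_injective (Fin.succ_injective n)
  simp only [Finset.map_eq_image, Fin.coe_succEmb]
  rw [← Finset.powerset_univ, Fin.univ_succ, Finset.cons_eq_insert, Finset.map_eq_image,
    Finset.sum_powerset_insert (by simp), Function.Embedding.coeFn_mk, Finset.powerset_image,
    Finset.sum_image hinj.injOn, Finset.sum_image hinj.injOn, Finset.powerset_univ]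

theorem sum_positions_eq_sum_head (n : ℕ) (f : List ℕ → M) :
    ∑ S : Finset (Fin n), f (positions S) =
      f [] + ∑ i ∈ Finset.range n, ∑ S : Finset (Fin (n - (i + 1))),
        f (i :: (positions S).map (· + (i + 1))) := by
  induction n generalizing f with
  | zero =>
    rw [Fintype.sum_subsingleton _ (∅ : Finset (Fin 0)), positions, Finset.sort_empty,
      List.map_nil, Finset.range_zero, Finset.sum_empty, add_zero]
  | succ n ih =>
    rw [sum_finset_fin_succ]
    simp only [positions_map_succ, positions_insert_zero_map_succ]
    rw [ih fun l => f (l.map (· + 1)), Finset.sum_range_succ', add_assoc]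
    simp only [List.map_nil, List.map_cons, List.map_map, Function.comp_def, add_assoc, zero_add]
    congr 2
    refine Finset.sum_congr rfl fun i _ => ?_
    rw [← add_assoc, Nat.add_sub_add_right]

end Positions

section Recursion

theorem segments_cons_map_add (w : List Bool) (i : ℕ) (cuts : List ℕ) :
    segments w (i :: cuts.map (· + (i + 1))) = w.take i :: segments (w.drop (i + 1)) cuts := by
  rw [segments]
  simp only [List.map_map, Function.comp_def, Nat.add_sub_cancel, List.map_id']

theorem segments_ne_nil (w : List Bool) (cuts : List ℕ) : segments w cuts ≠ [] := by
  cases cuts <;> simp [segments]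

variable (R : Type) [CommRing R]

theorem chainProd_cons (s : List Bool) {rest : List (List Bool)} (h : rest ≠ []) :
    chainProd R (s :: rest) = nuMap R (word R s) * bv R * chainProd R rest := by
  cases rest with
  | nil => exact absurd rfl h
  | cons => rfl

/-- The map `u ↦ ν(u)·b`, the factor contributed to the Tchebyshev transform by a segment that
ends in a cut. -/
def nuMulB : AB R →ₗ[R] AB R := LinearMap.mulRight R (bv R) ∘ₗ nuMap R

theorem nuMulB_comp_mulLeft_ev :
    nuMulB R ∘ₗ LinearMap.mulLeft R (ev R) = LinearMap.mulLeft R (ev R) ∘ₗ nuMulB R :=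
  LinearMap.ext fun u => by
    simp only [nuMulB, LinearMap.comp_apply, LinearMap.mulLeft_apply, LinearMap.mulRight_apply,
      nuMap_ev_mul, mul_assoc]

theorem Tmap_word (w : List Bool) :
    Tmap R (word R w) = ∑ S : Finset (Fin w.length), chainProd R (segments w (positions S)) :=
  onBasis_word _ w

theorem Tmap_word_eq_kappa_add (w : List Bool) :
    Tmap R (word R w) = kappa R (word R w) + ∑ i ∈ Finset.range w.length,
      nuMap R (word R (w.take i)) * bv R * Tmap R (word R (w.drop (i + 1))) := by
  rw [Tmap_word, sum_positions_eq_sum_head w.length fun cuts => chainProd R (segments w cuts)]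
  congr 1
  · rw [segments, chainProd]
  · refine Finset.sum_congr rfl fun i _ => ?_
    simp only [Tmap_word, segments_cons_map_add, chainProd_cons R _ (segments_ne_nil _ _),
      Finset.mul_sum]
    rw [List.length_drop]

theorem Tmap_eq_kappa_add (u : AB R) :
    Tmap R u = kappa R u +
      LinearMap.mul' R (AB R) (TensorProduct.map (nuMulB R) (Tmap R) (Delta R u)) := by
  suffices h : Tmap R = kappa R +
      LinearMap.mul' R (AB R) ∘ₗ TensorProduct.map (nuMulB R) (Tmap R) ∘ₗ Delta R from
    LinearMap.congr_fun h u
  refine linearMap_ext_word fun w => ?_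
  rw [Tmap_word_eq_kappa_add]
  simp only [nuMulB, LinearMap.add_apply, LinearMap.comp_apply, Delta, onBasis_word, map_sum,
    TensorProduct.map_tmul, LinearMap.mulRight_apply, LinearMap.mul'_apply]

theorem Tmap_ev_mul (u : AB R) : Tmap R (ev R * u) = ev R * Tmap R u :=
  calc Tmap R (ev R * u)
      = kappa R (ev R * u) + LinearMap.mul' R (AB R)
          (TensorProduct.map (nuMulB R) (Tmap R) (Delta R (ev R * u))) :=
        Tmap_eq_kappa_add R _
    _ = ev R * kappa R u + LinearMap.mul' R (AB R)
          ((LinearMap.mulLeft R (ev R)).rTensor (AB R)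
            (TensorProduct.map (nuMulB R) (Tmap R) (Delta R u))) := by
        rw [kappa_ev_mul, Delta_ev_mul, LinearMap.map_rTensor, nuMulB_comp_mulLeft_ev,
          LinearMap.rTensor_map]
    _ = ev R * kappa R u + ev R * LinearMap.mul' R (AB R)
          (TensorProduct.map (nuMulB R) (Tmap R) (Delta R u)) := by
        rw [mul'_rTensor_mulLeft]
    _ = ev R * Tmap R u := by rw [← mul_add, ← Tmap_eq_kappa_add]

end Recursion

theorem tchebyshev_commutes_with_e_general (R : Type) [CommRing R] (u : AB R) :
    Tmap R (ev R * u) = ev R * Tmap R u ∧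
    Tmap R ((cv R ^ 2 - 2 * dv R) * u) = (cv R ^ 2 - 2 * dv R) * Tmap R u := by
  refine ⟨Tmap_ev_mul R u, ?_⟩
  rw [cv_sq_sub_two_mul_dv, sq, mul_assoc, Tmap_ev_mul, Tmap_ev_mul, mul_assoc]

theorem tchebyshev_commutes_with_e (u : AB ℤ) :
    Tmap ℤ (ev ℤ * u) = ev ℤ * Tmap ℤ u ∧
    Tmap ℤ ((cv ℤ ^ 2 - 2 * dv ℤ) * u) = (cv ℤ ^ 2 - 2 * dv ℤ) * Tmap ℤ u :=
  tchebyshev_commutes_with_e_general ℤ u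

end Tcheb
end
end
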